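/- (Correctness content of Theorem 1 on S-Dijkstra's algorithm.) Let (G, w) be a road network, S a scope mapping on G with scope values ν, and s ∈ V(G) a start vertex. Then for every vertex v ∈ V(G) for which at least one s-admissible walk from s to v exists in G, there exists an optimal s-admissible walk from s to v, i.e., an s-admissible walk from s to v whose weight is minimum among the weights of all s-admissible walks from s to v in G. -/

import Mathlib

open scoped ENNReal NNReal

/-- A walk in a directed multigraph (vertices `V`, edges `E` with endpoint maps
`src`, `tgt`) from a vertex to a vertex, given by its list of edges. -/
def IsWalk {V E : Type} (src tgt : E → V) : V → V → List E → Prop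
  | s, v, [] => s = v
  | s, v, e :: p => src e = s ∧ IsWalk src tgt (tgt e) v p

/-- The weight of a walk w.r.t. an edge weighting. -/
def walkWeight {E : Type} (w : E → NNReal) (p : List E) : NNReal :=
  (p.map w).sum

/-- `Admissible src tgt w S ν H x e` expresses that the edge `e ∈ E(H)` is
`x`-admissible, for the scope mapping `S` with scope values `ν`, in the
spanning subgraph of the road network given by the edge set `H`: there is a
walk `P` from `x` to the tail of `e` in `H − e` such that (1) every edge of
`P` is `x`-admissible in `H − e`, (2) `P` is of minimum weight subject to (1),
and (3) `Σ_{f ∈ E(P), S f > S e} w f ≤ ν (S e)`. -/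
def Admissible {V E : Type} [DecidableEq E] (src tgt : E → V) (w : E → NNReal)
    (S : E → ℕ∞) (ν : ℕ∞ → ℝ≥0∞) (H : Finset E) (x : V) (e : E) : Prop :=
  if he : e ∈ H then
    ∃ P : List E,
      (∀ f ∈ P, f ∈ H.erase e) ∧
      IsWalk src tgt x (src e) P ∧
      (∀ f ∈ P, Admissible src tgt w S ν (H.erase e) x f) ∧
      (∀ Q : List E, (∀ f ∈ Q, f ∈ H.erase e) → IsWalk src tgt x (src e) Q →
        (∀ f ∈ Q, Admissible src tgt w S ν (H.erase e) x f) →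
        walkWeight w P ≤ walkWeight w Q) ∧
      ((((P.filter fun f => S e < S f).map w).sum : ℝ≥0∞) ≤ ν (S e))
  else False
termination_by H.card
decreasing_by all_goals exact Finset.card_erase_lt_of_mem he

/-- A walk from `s` to `v` is `s`-admissible in `G` (edge set `Finset.univ`)
for the scope mapping `S` if every one of its edges is `s`-admissible. -/
def AdmissibleWalk {V E : Type} [Fintype E] [DecidableEq E] (src tgt : E → V)
    (w : E → NNReal) (S : E → ℕ∞) (ν : ℕ∞ → ℝ≥0∞) (s v : V) (P : List E) : Prop :=
  IsWalk src tgt s v P ∧ ∀ e ∈ P, Admissible src tgt w S ν Finset.univ s e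

/-- Walk weights lie in the additive submonoid generated by the finitely many edge weights. As all
edge weights are nonnegative, this submonoid is partially well-ordered (Higman's lemma), so every
nonempty family of walks, even an infinite one, has a member of minimum weight. -/
theorem isWF_range_walkWeight {E : Type} [Finite E] (w : E → NNReal) :
    (Set.range (walkWeight w)).IsWF := by
  have hpwo : (AddSubmonoid.closure (Set.range w) : Set NNReal).IsPWO :=
    Set.IsPWO.addSubmonoid_closure (fun _ _ => zero_le) (Set.finite_range w).isPWO
  refine hpwo.isWF.mono ?_
  rintro _ ⟨p, rfl⟩
  refine AddSubmonoid.list_sum_mem _ fun x hx => ?_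
  obtain ⟨e, -, rfl⟩ := List.mem_map.1 hx
  exact AddSubmonoid.subset_closure ⟨e, rfl⟩

/-- Correctness content of Theorem 1 (S-Dijkstra): for every vertex `v` for
which at least one `s`-admissible walk from `s` to `v` exists, there exists an
optimal `s`-admissible walk from `s` to `v`, i.e. one of minimum weight among
all `s`-admissible walks from `s` to `v`. -/
theorem exists_optimal_admissible_walk {V E : Type} [Fintype V] [Fintype E]
    [DecidableEq E] (src tgt : E → V) (w : E → NNReal)
    (S : E → ℕ∞) (ν : ℕ∞ → ℝ≥0∞)
    (hS0 : 0 ∈ Set.range S) (hStop : ⊤ ∈ Set.range S)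
    (hν0 : ν 0 = 0) (hνtop : ν ⊤ = ⊤)
    (hνmono : ∀ i ∈ Set.range S, ∀ j ∈ Set.range S, i < j → ν i < ν j)
    (s v : V) (h : ∃ P : List E, AdmissibleWalk src tgt w S ν s v P) :
    ∃ P : List E, AdmissibleWalk src tgt w S ν s v P ∧
      ∀ Q : List E, AdmissibleWalk src tgt w S ν s v Q →
        walkWeight w P ≤ walkWeight w Q := by
  -- Only the finiteness of the edge set matters: any nonempty set of walks, in particular that of
  -- the admissible walks from `s` to `v`, has a member of minimum weight.
  have hwf : (walkWeight w '' {P | AdmissibleWalk src tgt w S ν s v P}).IsWF :=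
    (isWF_range_walkWeight w).mono (Set.image_subset_range _ _)
  have hne : (walkWeight w '' {P | AdmissibleWalk src tgt w S ν s v P}).Nonempty :=
    Set.Nonempty.image _ h
  obtain ⟨P, hP, hmin⟩ := hwf.min_mem hne
  exact ⟨P, hP, fun Q hQ => hmin.trans_le (hwf.min_le hne ⟨Q, hQ, rfl⟩)⟩
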